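/- Fix c, j ∈ [k+1] with k = m−1. Call a pair (A, B) of set partitions of the m marked vertices a permissible monomial if: A has m−1 parts, with j in the unique part of size two (together with some vertex ℓ) and all other vertices singletons; and B has exactly two parts, with j in one part and both c and ℓ in the other part. Then the right-hand side of the spanning forest identity L_{c,c}(j) (obtained by substituting the Laplacian minor L_{c,c} into the j-th column expansion identity and applying the all-minors matrix tree theorem) consists of exactly one copy of every permissible monomial, each with coefficient +1. -/

import Mathlib

open Finset

/-- Determinant of the minor of the `ℕ`-indexed matrix `M` obtained by restricting to
rows `{0,...,n-1} \ I` and columns `{0,...,n-1} \ J` (in increasing order). -/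
noncomputable def minorDet {R : Type*} [CommRing R] (M : Matrix ℕ ℕ R) (n : ℕ)
    (I J : Finset ℕ) : R :=
  if h : (Finset.range n \ J).card = (Finset.range n \ I).card then
    Matrix.det (Matrix.of fun i j : Fin (Finset.range n \ I).card =>
      M (((Finset.range n \ I).orderIsoOfFin rfl i : ℕ))
        (((Finset.range n \ J).orderIsoOfFin h j : ℕ)))
  else 0


/-- The weighted Laplacian of the complete graph on vertices `{0,…,n−1}` with symmetric
edge weights `a`: `L_{ii} = Σ_{l≠i} a_{il}` and `L_{ij} = −a_{ij}` for `i ≠ j`. -/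
noncomputable def lap {R : Type*} [CommRing R] (a : ℕ → ℕ → R) (n : ℕ) :
    Matrix ℕ ℕ R :=
  fun i j => if i = j then ∑ l ∈ Finset.range n \ {i}, a i l else -(a i j)

/-- Skipping map: `skip t` enumerates `{0,1,2,…} ∖ {t}` in increasing order, so that
index `i` of the matrix with row (or column) `t` removed corresponds to original index
`skip t i`. -/
def skip (t i : ℕ) : ℕ := if i < t then i else i + 1

/-- The right-hand side `L_{r,c}(j)` of the spanning forest identity obtained by
substituting the Laplacian minor `L_{r,c}` (row `r` and column `c` removed, with
`r, c < m = k + 1` marked vertices among `n` vertices) for `M` in the `j`-th column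
expansion identity (`0 ≤ j < k = m − 1`):
`(−1)^{r+c} · Σ_{i<k} (−1)^{i+j} det(L_{{skip r i, r},{skip c j, c}})
  · det(L_{[m]∖{skip r i},[m]∖{skip c j}})`
(the factor `(−1)^{r+c}` normalises `det L_{r,c}` to the spanning tree polynomial, so
that the left-hand side of the identity is `Φ_{(1,…,1)} Φ_{(1,2,…,m)}`). -/
noncomputable def lapRHS {R : Type*} [CommRing R] (a : ℕ → ℕ → R) (n m r c j : ℕ) : R :=
  (-1 : R) ^ (r + c) *
  ∑ i ∈ Finset.range (m - 1), (-1 : R) ^ (i + j) *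
    (minorDet (lap a n) n {r, skip r i} {c, skip c j} *
      minorDet (lap a n) n (Finset.range m \ {skip r i}) (Finset.range m \ {skip c j}))

/-- A finite edge set `F` is a spanning forest of `G` compatible with the set partition of
(a subset of) the marked vertices `v : Fin m → V` encoded by `p : Fin m → Option ℕ`
(`p i = none` means vertex `i` is unconstrained, `p i = some ℓ` means vertex `i` lies in
the part labelled `ℓ`): the edges of `F` lie in `G`, `F` is acyclic, two constrained
marked vertices lie in the same tree iff they have the same label, and every vertex of
the graph lies in the tree of some constrained marked vertex (so the trees of the forest
are in bijection with the parts of the partition). -/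
def IsCompatibleForest {V : Type*} [Fintype V] [DecidableEq V] (G : SimpleGraph V) {m : ℕ}
    (v : Fin m → V) (p : Fin m → Option ℕ) (F : Finset (Sym2 V)) : Prop :=
  (F : Set (Sym2 V)) ⊆ G.edgeSet ∧
  (SimpleGraph.fromEdgeSet (F : Set (Sym2 V))).IsAcyclic ∧
  (∀ i j : Fin m, p i ≠ none → p j ≠ none →
    ((SimpleGraph.fromEdgeSet (F : Set (Sym2 V))).Reachable (v i) (v j) ↔ p i = p j)) ∧
  (∀ w : V, ∃ i : Fin m, p i ≠ none ∧
    (SimpleGraph.fromEdgeSet (F : Set (Sym2 V))).Reachable w (v i))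

/-- The spanning forest sum `Σ_{F ∼ P} Π_{e ∈ F} x_e` of the graph `G` with edge
weights `x`, marked vertices `v`, and partition `P` encoded by `p`, in the
included-edge-weight convention in which the all-minors matrix tree theorem expresses
determinants of Laplacian minors (the paper's omitted-edge polynomials `Π_{e ∉ F} a_e`
satisfy exactly the same quadratic identities, by the substitution `a_e ↦ 1/a_e`). -/
noncomputable def forestPoly {V : Type*} [Fintype V] [DecidableEq V] {R : Type*}
    [CommRing R] (G : SimpleGraph V) [DecidableRel G.Adj] (x : Sym2 V → R) {m : ℕ}
    (v : Fin m → V) (p : Fin m → Option ℕ) : R :=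
  ∑ F ∈ G.edgeFinset.powerset,
    (letI := Classical.dec (IsCompatibleForest G v p F)
     if IsCompatibleForest G v p F then ∏ e ∈ F, x e else 0)

/-!
Ground the Laplacian at a vertex set `I` by replacing its rows indexed by `I` with those of the
identity matrix. Expanding determinants row by row over the choice of a parent for every vertex,
and using Cramer's rule for a single choice of parents, one finds that the `(j, i)` entry of the
adjugate is the sum `Φ_{I ∪ {i}}(j, i)` over the spanning forests rooted at `I ∪ {i}` in which `j`
lies in the tree of `i`. Up to sign, all minors in the column expansion are such entries. Write
`Φ_I` for the sum over all forests rooted at `I` and `M` for the set of marked vertices. Then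
`L_{c,c}(j)` becomes
`Φ_{j,c} Φ_{M ∖ j} - ∑_{y ≠ j, c} Φ_{y,c}(j, y) Φ_{M ∖ y}(y, j)`.

Rerooting a tree gives `Φ_{K ∪ {y}}(j, y) = Φ_{K ∪ {j}}(y, j)`. Hence
`Φ_{M ∖ j} = ∑_{ℓ ≠ j} Φ_{M ∖ ℓ}(ℓ, j)`, and the `y`-th subtracted term is
`Φ_{j,c}(y, j) Φ_{M ∖ y}(y, j)`. The two-tree forests with `ℓ` in the tree of `j` cancel, which
leaves `∑_ℓ Φ_{M ∖ ℓ}(ℓ, j) Φ_{j,c}(ℓ, c)`, the sum of the permissible monomials.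
-/

/-! ### The directed matrix-tree theorem -/

section ParentMaps

variable {V : Type*} {I : Finset V} {f : V → V}

/-- `f` sends each vertex to its parent in a forest with root set `I`: the roots are fixed, and
every vertex reaches a root by passing to parents. -/
def IsParentMap (I : Finset V) (f : V → V) : Prop :=
  (∀ r ∈ I, f r = r) ∧ ∀ w, ∃ n, f^[n] w ∈ I

theorem exists_iterate_apply_eq_iff {i : V} (hi : f i = i) (w : V) :
    (∃ n, f^[n] (f w) = i) ↔ ∃ n, f^[n] w = i := by
  constructor
  · rintro ⟨n, hn⟩
    exact ⟨n + 1, hn⟩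
  · rintro ⟨_ | n, hn⟩
    · obtain rfl : w = i := hn
      exact ⟨0, hi⟩
    · exact ⟨n, hn⟩

theorem exists_iterate_apply_mem_iff (hf : ∀ r ∈ I, f r = r) (w : V) :
    (∃ n, f^[n] (f w) ∈ I) ↔ ∃ n, f^[n] w ∈ I := by
  constructor
  · rintro ⟨n, hn⟩
    exact ⟨n + 1, hn⟩
  · rintro ⟨_ | n, hn⟩
    · exact ⟨0, (hf w hn).symm ▸ hn⟩
    · exact ⟨n, hn⟩

theorem exists_iterate_eq_iff_of_fixed {r s : V} (hr : f r = r) : (∃ n, f^[n] r = s) ↔ r = s := by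
  simp only [Function.iterate_fixed hr, exists_const]

theorem isParentMap_iff_exists_depth :
    IsParentMap I f ↔ (∀ r ∈ I, f r = r) ∧ ∃ d : V → ℕ, ∀ w ∉ I, d (f w) < d w := by
  classical
  refine and_congr_right fun _ => ⟨fun h => ⟨fun w => Nat.find (h w), fun w hw => ?_⟩, ?_⟩
  · have hpos : Nat.find (h w) ≠ 0 := fun h0 => hw (by simpa [h0] using Nat.find_spec (h w))
    obtain ⟨n, hn⟩ := Nat.exists_eq_succ_of_ne_zero hpos
    have hmem : f^[n] (f w) ∈ I := by
      simpa only [hn, Function.iterate_succ_apply] using Nat.find_spec (h w)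
    calc Nat.find (h (f w)) ≤ n := Nat.find_min' _ hmem
      _ < Nat.find (h w) := hn ▸ n.lt_succ_self
  · rintro ⟨d, hd⟩ w
    induction w using (measure d).wf.induction with
    | _ w ih =>
      by_cases hw : w ∈ I
      · exact ⟨0, hw⟩
      · obtain ⟨n, hn⟩ := ih (f w) (hd w hw)
        exact ⟨n + 1, hn⟩

theorem IsParentMap.iterate_apply_ne (hf : IsParentMap I f) {w : V} (hw : w ∉ I) (n : ℕ) :
    f^[n] (f w) ≠ w := by
  intro hn
  obtain ⟨k, hk⟩ := hf.2 w
  have hroot : ∀ l, k ≤ l → f^[l] w ∈ I := by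
    intro l hl
    obtain ⟨t, rfl⟩ := Nat.exists_eq_add_of_le' hl
    rwa [Function.iterate_add_apply, Function.iterate_fixed (hf.1 _ hk)]
  have hper : f^[(n + 1) * k] w = w := Function.IsPeriodicPt.mul_const (m := n + 1) hn k
  exact hw (hper ▸ hroot _ (Nat.le_mul_of_pos_left k n.succ_pos))

theorem IsParentMap.apply_ne (hf : IsParentMap I f) {w : V} (hw : w ∉ I) : f w ≠ w :=
  hf.iterate_apply_ne hw 0

theorem IsParentMap.apply_apply_ne (hf : IsParentMap I f) {w : V} (hw : w ∉ I) : f (f w) ≠ w :=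
  hf.iterate_apply_ne hw 1

end ParentMaps

section DirectedMatrixTree

open scoped Matrix

variable {V : Type*} [DecidableEq V] {R : Type*} [CommRing R]

/-- The grounded Laplacian of the digraph whose only edges are `w → f w`. -/
def parentMatrix (R : Type*) [CommRing R] (I : Finset V) (f : V → V) : Matrix V V R :=
  Matrix.of fun w => if w ∈ I then Pi.single w 1 else Pi.single w 1 - Pi.single (f w) 1

theorem parentMatrix_apply (I : Finset V) (f : V → V) (w : V) :
    parentMatrix R I f w =
      if w ∈ I then Pi.single w 1 else Pi.single w 1 - Pi.single (f w) 1 := rfl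

variable [Fintype V]

theorem det_eq_one_of_unitriangular {α : Type*} [LinearOrder α] (d : V → α) (M : Matrix V V R)
    (hM : ∀ w u, d w ≤ d u → M w u = (1 : Matrix V V R) w u) : M.det = 1 := by
  have hM' : M.BlockTriangular (fun w => OrderDual.toDual (d w)) := by
    intro w u (h : d w < d u)
    rw [hM w u h.le, Matrix.one_apply_ne (fun hwu => h.ne (congrArg d hwu))]
  rw [hM'.det]
  refine prod_eq_one fun k _ => ?_
  rw [← Matrix.det_one (n := {w // OrderDual.toDual (d w) = k})]
  congr 1
  ext ⟨w, hw⟩ ⟨u, hu⟩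
  rw [Matrix.toSquareBlock_def, Matrix.of_apply,
    hM w u (OrderDual.toDual.injective (hw.trans hu.symm)).le]
  simp only [Matrix.one_apply, Subtype.mk.injEq]

/-- The Laplacian of the complete digraph with weights `a`, grounded at `I`: the rows indexed by
`I` are replaced by those of the identity matrix. -/
def groundedLaplacian (a : V → V → R) (I : Finset V) : Matrix V V R :=
  Matrix.of fun w => if w ∈ I then Pi.single w 1
    else ∑ v, a w v • (Pi.single w 1 - Pi.single v 1)

theorem groundedLaplacian_apply (a : V → V → R) (I : Finset V) (w : V) :
    groundedLaplacian a I w =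
      if w ∈ I then Pi.single w 1 else ∑ v, a w v • (Pi.single w 1 - Pi.single v 1) := rfl

theorem parentMatrix_mulVec (I : Finset V) (f : V → V) (χ : V → R) (w : V) :
    (parentMatrix R I f *ᵥ χ) w = if w ∈ I then χ w else χ w - χ (f w) := by
  change parentMatrix R I f w ⬝ᵥ χ = _
  by_cases hw : w ∈ I <;> simp [parentMatrix_apply, hw, sub_dotProduct]

open Classical in
theorem det_parentMatrix {I : Finset V} {f : V → V} (hf : ∀ r ∈ I, f r = r) :
    (parentMatrix R I f).det = if IsParentMap I f then 1 else 0 := by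
  split_ifs with h
  · obtain ⟨d, hd⟩ := (isParentMap_iff_exists_depth.1 h).2
    refine det_eq_one_of_unitriangular d _ fun w u hwu => ?_
    by_cases hw : w ∈ I
    · simp [parentMatrix_apply, hw, Matrix.one_apply, Pi.single_apply, eq_comm]
    · have hu : u ≠ f w := by
        rintro rfl
        exact (hd w hw).not_ge hwu
      simp [parentMatrix_apply, hw, hu, Matrix.one_apply, Pi.single_apply, eq_comm]
  · obtain ⟨w, hw⟩ : ∃ w, ¬ ∃ n, f^[n] w ∈ I := not_forall.1 fun h' => h ⟨hf, h'⟩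
    refine Matrix.det_eq_zero_of_mulVec_eq_zero_of_mem_nonZeroDivisors
      (v := fun u => if ∃ n, f^[n] u ∈ I then 0 else 1) (i := w) ?_ ?_
    · ext u
      rw [parentMatrix_mulVec]
      by_cases hu : u ∈ I
      · rw [if_pos hu]
        exact if_pos ⟨0, hu⟩
      · simp only [if_neg hu, exists_iterate_apply_mem_iff hf, sub_self, Pi.zero_apply]
    · rw [if_neg hw]
      exact one_mem _

-- The indicator `χ` of the vertices below the root `i` solves `parentMatrix * χ = e_i`, so by
-- Cramer's rule the `i`-th column of the adjugate is `det * χ`.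
open Classical in
theorem adjugate_parentMatrix {I : Finset V} {f : V → V} (hf : ∀ r ∈ I, f r = r) {i : V}
    (hi : i ∈ I) (j : V) : (parentMatrix R I f).adjugate j i =
      if IsParentMap I f ∧ ∃ n, f^[n] j = i then 1 else 0 := by
  have hχ : parentMatrix R I f *ᵥ (fun w => if ∃ n, f^[n] w = i then 1 else 0) =
      Pi.single i 1 := by
    ext w
    rw [parentMatrix_mulVec]
    by_cases hw : w ∈ I
    · simp only [if_pos hw, exists_iterate_eq_iff_of_fixed (hf w hw), Pi.single_apply]
    · simp only [if_neg hw, exists_iterate_apply_eq_iff (hf i hi), sub_self,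
        Pi.single_eq_of_ne (ne_of_mem_of_not_mem hi hw).symm]
  calc (parentMatrix R I f).adjugate j i
      = ((parentMatrix R I f).adjugate *ᵥ Pi.single i 1) j := by simp
    _ = (parentMatrix R I f).det * if ∃ n, f^[n] j = i then 1 else 0 := by
        rw [← hχ, Matrix.mulVec_mulVec, Matrix.adjugate_mul, Matrix.smul_mulVec, Matrix.one_mulVec,
          Pi.smul_apply, smul_eq_mul]
    _ = _ := by rw [det_parentMatrix hf, ite_and]; split_ifs <;> simp

theorem updateRow_groundedLaplacian_insert (a : V → V → R) (I : Finset V) (i : V) (b : V → R) :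
    (groundedLaplacian a (insert i I)).updateRow i b = (groundedLaplacian a I).updateRow i b := by
  funext w
  by_cases hw : w = i
  · subst hw
    simp only [Matrix.updateRow_self]
  · simp only [Matrix.updateRow_ne hw, groundedLaplacian_apply, mem_insert, hw, false_or]

theorem det_updateRow_groundedLaplacian (a : V → V → R) {I : Finset V} {i : V} (hi : i ∈ I)
    (b : V → R) : ((groundedLaplacian a I).updateRow i b).det =
      ∑ f : V → V with ∀ r ∈ I, f r = r,
        (∏ w ∈ Iᶜ, a w (f w)) * ((parentMatrix R I f).updateRow i b).det := by
  let row (w v : V) : V → R := (parentMatrix R I fun _ => v).updateRow i b w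
  let parents (w : V) : Finset V := if w ∈ I then {w} else univ
  have hrow : (groundedLaplacian a I).updateRow i b =
      fun w => ∑ v ∈ parents w, (if w ∈ I then 1 else a w v) • row w v := by
    funext w
    by_cases hw : w ∈ I
    · by_cases hwi : w = i
      · subst hwi
        simp [parents, row, hw]
      · simp [parents, row, hw, Matrix.updateRow_ne hwi, groundedLaplacian_apply,
          parentMatrix_apply]
    · have hwi : w ≠ i := (ne_of_mem_of_not_mem hi hw).symm
      simp [parents, row, hw, Matrix.updateRow_ne hwi, groundedLaplacian_apply, parentMatrix_apply]
  have hparents : Fintype.piFinset parents = ({f | ∀ r ∈ I, f r = r} : Finset (V → V)) := by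
    ext f
    simp only [Fintype.mem_piFinset, mem_filter, mem_univ, true_and, parents]
    refine forall_congr' fun w => ?_
    split_ifs with hw <;> simp [hw]
  have hexpand := (Matrix.detRowAlternating (n := V) (R := R)).toMultilinearMap.map_sum_finset
    (fun w v => (if w ∈ I then 1 else a w v) • row w v) parents
  change Matrix.detRowAlternating ((groundedLaplacian a I).updateRow i b) = _
  rw [← hparents, hrow]
  refine hexpand.trans (sum_congr rfl fun f _ => ?_)
  have hweight : ∏ w, (if w ∈ I then 1 else a w (f w)) = ∏ w ∈ Iᶜ, a w (f w) := by
    rw [prod_ite, prod_const_one, one_mul, filter_notMem_eq_sdiff,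
      compl_eq_univ_sdiff]
  rw [MultilinearMap.map_smul_univ, hweight, smul_eq_mul]
  rfl

open Classical in
theorem adjugate_groundedLaplacian_eq_sum_parentMap (a : V → V → R) (I : Finset V) (i j : V) :
    (groundedLaplacian a I).adjugate j i =
      ∑ f : V → V with IsParentMap (insert i I) f ∧ ∃ n, f^[n] j = i,
        ∏ w ∈ (insert i I)ᶜ, a w (f w) := by
  have hi : i ∈ insert i I := mem_insert_self i I
  rw [Matrix.adjugate_apply, ← updateRow_groundedLaplacian_insert,
    det_updateRow_groundedLaplacian a hi, sum_filter, sum_filter]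
  refine sum_congr rfl fun f _ => ?_
  rw [← Matrix.adjugate_apply]
  by_cases hf : ∀ r ∈ insert i I, f r = r
  · rw [if_pos hf, adjugate_parentMatrix hf hi, mul_ite, mul_one, mul_zero]
  · rw [if_neg hf, if_neg fun h => hf h.1.1]

end DirectedMatrixTree

/-! ### The undirected matrix-tree theorem -/

section RootedForests

variable {V : Type*}

/-- The simple graph with edge set `F`; loops in `F` are ignored. -/
abbrev edgeGraph (F : Finset (Sym2 V)) : SimpleGraph V :=
  SimpleGraph.fromEdgeSet (F : Set (Sym2 V))

/-- `F` is the edge set of a spanning forest each of whose trees contains exactly one element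
of `I`. -/
structure IsRootedForest (I : Finset V) (F : Finset (Sym2 V)) : Prop where
  not_isDiag : ∀ e ∈ F, ¬ e.IsDiag
  isAcyclic : (edgeGraph F).IsAcyclic
  existsUnique_root : ∀ w, ∃! r, r ∈ I ∧ (edgeGraph F).Reachable w r

theorem of_reachable_of_forall_adj {G : SimpleGraph V} {P : V → Prop}
    (hP : ∀ u v, G.Adj u v → P u → P v) {u v : V} (h : G.Reachable u v) (hu : P u) : P v := by
  obtain ⟨p⟩ := h
  induction p with
  | nil => exact hu
  | cons hadj _ ih => exact ih (hP _ _ hadj hu)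

theorem eq_of_edgeGraph_eq {F F' : Finset (Sym2 V)} (hF : ∀ e ∈ F, ¬ e.IsDiag)
    (hF' : ∀ e ∈ F', ¬ e.IsDiag) (h : edgeGraph F = edgeGraph F') : F = F' := by
  ext e
  have he : e ∈ (edgeGraph F).edgeSet ↔ e ∈ (edgeGraph F').edgeSet := by rw [h]
  simp only [SimpleGraph.edgeSet_fromEdgeSet, Set.mem_sdiff, mem_coe] at he
  exact ⟨fun h => (he.1 ⟨h, hF e h⟩).1, fun h => (he.2 ⟨h, hF' e h⟩).1⟩

variable {I : Finset V} {F : Finset (Sym2 V)}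

theorem IsRootedForest.root_unique (hF : IsRootedForest I F) {w r s : V} (hr : r ∈ I)
    (hs : s ∈ I) (hwr : (edgeGraph F).Reachable w r) (hws : (edgeGraph F).Reachable w s) : r = s :=
  (hF.existsUnique_root w).unique ⟨hr, hwr⟩ ⟨hs, hws⟩

-- Shortest paths to the roots define the parent map.
theorem IsRootedForest.exists_isParentMap (hF : IsRootedForest I F) :
    ∃ f, IsParentMap I f ∧ ∀ w ∉ I, (edgeGraph F).Adj w (f w) := by
  choose root hroot using fun w => (hF.existsUnique_root w).exists
  have hparent (w : V) : ∃ v, (w ∈ I → v = w) ∧ (w ∉ I → (edgeGraph F).Adj w v ∧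
      (edgeGraph F).dist v (root v) < (edgeGraph F).dist w (root w)) := by
    by_cases hw : w ∈ I
    · exact ⟨w, fun _ => rfl, fun h => absurd hw h⟩
    obtain ⟨p, hp⟩ := (hroot w).2.exists_walk_length_eq_dist
    have hnil : ¬ p.Nil := SimpleGraph.Walk.not_nil_of_ne fun h => hw (h ▸ (hroot w).1)
    have hsame : root p.snd = root w := hF.root_unique (hroot _).1 (hroot w).1
      ((p.adj_snd hnil).reachable.trans (hroot _).2) (hroot w).2
    refine ⟨p.snd, fun h => absurd h hw, fun _ => ⟨p.adj_snd hnil, ?_⟩⟩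
    calc (edgeGraph F).dist p.snd (root p.snd) ≤ p.tail.length := by
          rw [hsame]
          exact SimpleGraph.dist_le p.tail
      _ < p.length := by
          rw [← SimpleGraph.Walk.length_tail_add_one hnil]
          exact Nat.lt_succ_self _
      _ = (edgeGraph F).dist w (root w) := hp
  choose f hfix hstep using hparent
  exact ⟨f, isParentMap_iff_exists_depth.2
    ⟨hfix, fun w => (edgeGraph F).dist w (root w), fun w hw => (hstep w hw).2⟩,
    fun w hw => (hstep w hw).1⟩

variable [Fintype V] [DecidableEq V] {f g : V → V}

/-- The edges joining each vertex outside the root set `I` to its parent under `f`. -/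
def parentEdges (I : Finset V) (f : V → V) : Finset (Sym2 V) :=
  Iᶜ.image fun w => s(w, f w)

namespace IsParentMap

theorem not_isDiag (hf : IsParentMap I f) : ∀ e ∈ parentEdges I f, ¬ e.IsDiag := by
  simp only [parentEdges, mem_image, mem_compl, forall_exists_index, and_imp]
  rintro _ w hw rfl
  exact (hf.apply_ne hw).symm

theorem adj_iff (hf : IsParentMap I f) {u v : V} :
    (edgeGraph (parentEdges I f)).Adj u v ↔ u ≠ v ∧ (f u = v ∨ f v = u) := by
  simp only [SimpleGraph.fromEdgeSet_adj, parentEdges, mem_coe, mem_image, mem_compl,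
    Sym2.eq_iff]
  constructor
  · rintro ⟨⟨w, -, ⟨rfl, rfl⟩ | ⟨rfl, rfl⟩⟩, hne⟩
    exacts [⟨hne, Or.inl rfl⟩, ⟨hne, Or.inr rfl⟩]
  · rintro ⟨hne, rfl | rfl⟩
    · exact ⟨⟨u, fun hu => hne (hf.1 u hu).symm, Or.inl ⟨rfl, rfl⟩⟩, hne⟩
    · exact ⟨⟨v, fun hv => hne (hf.1 v hv), Or.inr ⟨rfl, rfl⟩⟩, hne⟩

theorem reachable_iterate (hf : IsParentMap I f) (w : V) (n : ℕ) :
    (edgeGraph (parentEdges I f)).Reachable w (f^[n] w) := by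
  induction n with
  | zero => exact .refl w
  | succ n ih =>
    rw [Function.iterate_succ_apply']
    by_cases h : f^[n] w = f (f^[n] w)
    · rwa [← h]
    · exact ih.trans (hf.adj_iff.2 ⟨h, Or.inl rfl⟩).reachable

theorem reachable_iff_exists_iterate (hf : IsParentMap I f) {i : V} (hi : i ∈ I) (w : V) :
    (edgeGraph (parentEdges I f)).Reachable w i ↔ ∃ n, f^[n] w = i := by
  constructor
  · intro h
    refine of_reachable_of_forall_adj (P := fun w => ∃ n, f^[n] w = i) ?_ h.symm ⟨0, rfl⟩
    intro u v huv
    obtain ⟨-, rfl | rfl⟩ := hf.adj_iff.1 huv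
    · exact (exists_iterate_apply_eq_iff (hf.1 i hi) u).2
    · exact (exists_iterate_apply_eq_iff (hf.1 i hi) v).1
  · rintro ⟨n, rfl⟩
    exact hf.reachable_iterate w n

-- Removing the edge from `w` to its parent separates the descendants of `w` from the parent.
theorem isBridge (hf : IsParentMap I f) {w : V} (hw : w ∉ I) :
    (edgeGraph (parentEdges I f)).IsBridge s(w, f w) := by
  rw [SimpleGraph.isBridge_iff]
  intro h
  have hdesc : ∃ n, f^[n] (f w) = w := by
    refine of_reachable_of_forall_adj (P := fun u => ∃ n, f^[n] u = w) ?_ h ⟨0, rfl⟩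
    intro u v huv
    rw [SimpleGraph.deleteEdges_adj, hf.adj_iff] at huv
    obtain ⟨⟨-, rfl | rfl⟩, hdel⟩ := huv
    · rintro ⟨_ | n, hn⟩
      · obtain rfl : u = w := hn
        exact absurd rfl hdel
      · exact ⟨n, hn⟩
    · rintro ⟨n, hn⟩
      exact ⟨n + 1, hn⟩
  obtain ⟨n, hn⟩ := hdesc
  exact hf.iterate_apply_ne hw n hn

theorem isAcyclic (hf : IsParentMap I f) : (edgeGraph (parentEdges I f)).IsAcyclic := by
  rw [SimpleGraph.isAcyclic_iff_forall_adj_isBridge]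
  intro u v huv
  obtain ⟨hne, rfl | rfl⟩ := hf.adj_iff.1 huv
  · exact hf.isBridge fun hu => hne (hf.1 u hu).symm
  · rw [Sym2.eq_swap]
    exact hf.isBridge fun hv => hne (hf.1 v hv)

theorem isRootedForest (hf : IsParentMap I f) : IsRootedForest I (parentEdges I f) where
  not_isDiag := hf.not_isDiag
  isAcyclic := hf.isAcyclic
  existsUnique_root w := by
    obtain ⟨n, hn⟩ := hf.2 w
    refine ⟨f^[n] w, ⟨hn, hf.reachable_iterate w n⟩, ?_⟩
    rintro r ⟨hr, hwr⟩
    obtain ⟨m, hm⟩ := (hf.reachable_iff_exists_iterate hn r).1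
      (hwr.symm.trans (hf.reachable_iterate w n))
    rwa [Function.iterate_fixed (hf.1 r hr)] at hm

theorem eq_of_parentEdges_eq (hf : IsParentMap I f) (hg : IsParentMap I g)
    (h : parentEdges I f = parentEdges I g) : f = g := by
  obtain ⟨hfix, d, hd⟩ := isParentMap_iff_exists_depth.1 hf
  funext w
  induction w using (measure d).wf.induction with
  | _ w ih =>
    by_cases hw : w ∈ I
    · rw [hfix w hw, hg.1 w hw]
    · have hadj : (edgeGraph (parentEdges I g)).Adj w (f w) :=
        h ▸ hf.adj_iff.2 ⟨(hf.apply_ne hw).symm, Or.inl rfl⟩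
      obtain ⟨-, hparent | hchild⟩ := hg.adj_iff.1 hadj
      · exact hparent.symm
      · rw [← ih (f w) (hd w hw)] at hchild
        exact absurd hchild (hf.apply_apply_ne hw)

theorem prod_parentEdges {R : Type*} [CommMonoid R] (hf : IsParentMap I f) (x : Sym2 V → R) :
    ∏ e ∈ parentEdges I f, x e = ∏ w ∈ Iᶜ, x s(w, f w) := by
  refine prod_image fun u hu w _ huw => ?_
  obtain ⟨rfl, -⟩ | ⟨rfl, hchild⟩ := Sym2.eq_iff.1 huw
  · rfl
  · exact absurd (congrArg f hchild) (hf.apply_apply_ne (mem_compl.1 hu))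

end IsParentMap

theorem IsRootedForest.exists_parentEdges_eq (hF : IsRootedForest I F) :
    ∃ f, IsParentMap I f ∧ parentEdges I f = F := by
  obtain ⟨f, hf, hadj⟩ := hF.exists_isParentMap
  refine ⟨f, hf, eq_of_edgeGraph_eq hf.not_isDiag hF.not_isDiag ?_⟩
  have hle : edgeGraph (parentEdges I f) ≤ edgeGraph F := by
    intro u v huv
    obtain ⟨hne, rfl | rfl⟩ := hf.adj_iff.1 huv
    · exact hadj u fun hu => hne (hf.1 u hu).symm
    · exact (hadj v fun hv => hne (hf.1 v hv)).symm
  have hreach : (edgeGraph (parentEdges I f)).Reachable = (edgeGraph F).Reachable := by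
    ext u v
    refine ⟨fun h => h.mono hle, fun h => ?_⟩
    obtain ⟨r, ⟨hr, hur⟩, -⟩ := hf.isRootedForest.existsUnique_root u
    obtain ⟨s, ⟨hs, hvs⟩, -⟩ := hf.isRootedForest.existsUnique_root v
    obtain rfl := hF.root_unique hr hs (hur.mono hle) (h.trans (hvs.mono hle))
    exact hur.trans hvs.symm
  exact ((SimpleGraph.maximal_isAcyclic_iff_reachable_eq hle hf.isAcyclic).2 hreach).eq_of_le
    ⟨le_rfl, hF.isAcyclic⟩ hle

variable {R : Type*} [CommRing R]

open Classical in
/-- The weighted count of the spanning forests of the complete graph with root set `I` in which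
`j` and `i` lie in the same tree; for `j = i` this is the count of all forests with root set `I`. -/
noncomputable def rootedForestSum (x : Sym2 V → R) (I : Finset V) (j i : V) : R :=
  ∑ F with IsRootedForest I F ∧ (edgeGraph F).Reachable j i, ∏ e ∈ F, x e

open Classical in
theorem sum_parentMap_eq_rootedForestSum (x : Sym2 V → R) {i : V} (hi : i ∈ I) (j : V) :
    ∑ f : V → V with IsParentMap I f ∧ ∃ n, f^[n] j = i, ∏ w ∈ Iᶜ, x s(w, f w) =
      rootedForestSum x I j i := by
  refine sum_nbij (parentEdges I) ?_ ?_ ?_ ?_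
  · intro f hf
    obtain ⟨hf, hji⟩ := (mem_filter_univ f).1 hf
    exact (mem_filter_univ _).2
      ⟨hf.isRootedForest, (hf.reachable_iff_exists_iterate hi j).2 hji⟩
  · intro f hf g hg
    exact ((mem_filter_univ f).1 hf).1.eq_of_parentEdges_eq ((mem_filter_univ g).1 hg).1
  · intro F hF
    obtain ⟨hF, hji⟩ := (mem_filter_univ F).1 hF
    obtain ⟨f, hf, rfl⟩ := hF.exists_parentEdges_eq
    exact ⟨f, (mem_filter_univ f).2 ⟨hf, (hf.reachable_iff_exists_iterate hi j).1 hji⟩, rfl⟩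
  · intro f hf
    exact (((mem_filter_univ f).1 hf).1.prod_parentEdges x).symm

theorem adjugate_groundedLaplacian (x : Sym2 V → R) (I : Finset V) (i j : V) :
    (groundedLaplacian (fun u v => x s(u, v)) I).adjugate j i =
      rootedForestSum x (insert i I) j i := by
  rw [adjugate_groundedLaplacian_eq_sum_parentMap,
    sum_parentMap_eq_rootedForestSum x (mem_insert_self i I)]

theorem det_groundedLaplacian (x : Sym2 V → R) {I : Finset V} {c : V} (hc : c ∈ I) :
    (groundedLaplacian (fun u v => x s(u, v)) I).det = rootedForestSum x I c c := by
  have hrow : groundedLaplacian (fun u v => x s(u, v)) I c = Pi.single c 1 := if_pos hc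
  rw [← Matrix.updateRow_eq_self (groundedLaplacian _ I) c, hrow, ← Matrix.adjugate_apply,
    adjugate_groundedLaplacian, insert_eq_self.2 hc]

end RootedForests

/-! ### Identities between rooted forest sums -/

section ForestSumIdentities

variable {V : Type*} {I K : Finset V} {F : Finset (Sym2 V)}

theorem IsRootedForest.insert_swap [DecidableEq V] {i j : V} (hF : IsRootedForest (insert i K) F)
    (hi : i ∉ K) (hji : (edgeGraph F).Reachable j i) : IsRootedForest (insert j K) F where
  not_isDiag := hF.not_isDiag
  isAcyclic := hF.isAcyclic
  existsUnique_root w := by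
    obtain ⟨r, ⟨hr, hwr⟩, -⟩ := hF.existsUnique_root w
    obtain rfl | hrK := mem_insert.1 hr
    · refine ⟨j, ⟨mem_insert_self j K, hwr.trans hji.symm⟩, ?_⟩
      rintro s ⟨hs, hws⟩
      refine (mem_insert.1 hs).resolve_right fun hsK => hi ?_
      rwa [hF.root_unique hr (mem_insert_of_mem hsK) hwr hws]
    · refine ⟨r, ⟨mem_insert_of_mem hrK, hwr⟩, ?_⟩
      rintro s ⟨hs, hws⟩
      obtain rfl | hsK := mem_insert.1 hs
      · refine absurd ?_ hi
        rwa [hF.root_unique (mem_insert_self i K) hr (hws.trans hji) hwr]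
      · exact hF.root_unique (mem_insert_of_mem hsK) hr hws hwr

variable [Fintype V] [DecidableEq V] {R : Type*} [CommRing R] (x : Sym2 V → R)

theorem rootedForestSum_insert_comm {i j : V} (hi : i ∉ K) (hj : j ∉ K) :
    rootedForestSum x (insert i K) j i = rootedForestSum x (insert j K) i j := by
  classical
  refine sum_congr (filter_congr fun F _ => ?_) fun _ _ => rfl
  exact ⟨fun h => ⟨h.1.insert_swap hi h.2, h.2.symm⟩, fun h => ⟨h.1.insert_swap hj h.2, h.2.symm⟩⟩

theorem rootedForestSum_eq_zero {r s : V} (hr : r ∈ I) (hs : s ∈ I) (hrs : r ≠ s) :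
    rootedForestSum x I r s = 0 := by
  classical
  rw [rootedForestSum, filter_false_of_mem, sum_empty]
  rintro F - ⟨hF, hreach⟩
  exact hrs (hF.root_unique hr hs (.refl r) hreach)

theorem sum_rootedForestSum (I : Finset V) (w c : V) :
    ∑ r ∈ I, rootedForestSum x I w r = rootedForestSum x I c c := by
  classical
  simp only [rootedForestSum, sum_filter]
  rw [sum_comm]
  refine sum_congr rfl fun F _ => ?_
  by_cases hF : IsRootedForest I F
  · obtain ⟨r, ⟨hr, hwr⟩, -⟩ := hF.existsUnique_root w
    rw [sum_eq_single_of_mem r hr fun s hs hsr =>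
      if_neg fun h => hsr (hF.root_unique hs hr h.2 hwr), if_pos ⟨hF, hwr⟩, if_pos ⟨hF, .refl c⟩]
  · simp only [hF, false_and, if_false, sum_const_zero]

theorem sum_rootedForestSum_erase {M : Finset V} {j : V} (hj : j ∈ M) (c : V) :
    ∑ l ∈ M.erase j, rootedForestSum x (M.erase l) l j = rootedForestSum x (M.erase j) c c := by
  rw [← sum_rootedForestSum x _ j]
  refine sum_congr rfl fun l hl => ?_
  have hl' : M.erase j = insert l ((M.erase j).erase l) := (insert_erase hl).symm
  have hj' : M.erase l = insert j ((M.erase j).erase l) := by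
    rw [erase_right_comm, insert_erase (mem_erase.2 ⟨(ne_of_mem_erase hl).symm, hj⟩)]
  rw [hl', hj']
  exact rootedForestSum_insert_comm x (fun h => ne_of_mem_erase (mem_of_mem_erase h) rfl)
    (notMem_erase l _)

theorem rootedForestSum_mul_sub_sum {M : Finset V} {c j : V} (hc : c ∈ M) (hj : j ∈ M)
    (hcj : c ≠ j) :
    rootedForestSum x {j, c} j j * rootedForestSum x (M.erase j) c c -
        ∑ y ∈ (M.erase j).erase c,
          rootedForestSum x {y, c} j y * rootedForestSum x (M.erase y) y j =
      ∑ l ∈ M.erase j, rootedForestSum x (M.erase l) l j * rootedForestSum x {j, c} l c := by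
  have hswap : ∑ y ∈ (M.erase j).erase c,
        rootedForestSum x {y, c} j y * rootedForestSum x (M.erase y) y j =
      ∑ l ∈ M.erase j, rootedForestSum x {j, c} l j * rootedForestSum x (M.erase l) l j := by
    rw [← add_sum_erase _ _ (mem_erase.2 ⟨hcj, hc⟩),
      rootedForestSum_eq_zero x (by simp) (by simp) hcj, zero_mul, zero_add]
    refine sum_congr rfl fun y hy => ?_
    rw [rootedForestSum_insert_comm x (notMem_singleton.2 (ne_of_mem_erase hy))
      (notMem_singleton.2 hcj.symm)]
  rw [hswap, ← sum_rootedForestSum_erase x hj, mul_sum, ← sum_sub_distrib]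
  refine sum_congr rfl fun l _ => ?_
  have htotal := sum_rootedForestSum x {j, c} l j
  rw [sum_pair hcj.symm] at htotal
  rw [← htotal]
  ring

end ForestSumIdentities

/-! ### Minors of the Laplacian -/

section Minors

variable {R : Type*} [CommRing R]

theorem det_submatrix_of_rows_eq_single {S V : Type*} [Fintype S] [DecidableEq S] [Fintype V]
    [DecidableEq V] {A : Matrix V V R} {β : S → V} (hβ : Function.Injective β)
    (hA : ∀ w ∉ Set.range β, A w = Pi.single w 1) : (A.submatrix β β).det = A.det := by
  classical
  have hzero : ∀ w, w ∉ Set.range β → ∀ u, u ∈ Set.range β → A w u = 0 := by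
    intro w hw u hu
    rw [hA w hw, Pi.single_eq_of_ne (ne_of_mem_of_not_mem hu hw)]
  have hone : A.toSquareBlockProp (· ∉ Set.range β) = 1 := by
    ext ⟨w, hw⟩ ⟨u, hu⟩
    rw [Matrix.toSquareBlockProp_def, Matrix.of_apply, hA w hw]
    simp only [Matrix.one_apply, Pi.single_apply, Subtype.mk.injEq, eq_comm]
  rw [Matrix.twoBlockTriangular_det A (· ∈ Set.range β) hzero, hone, Matrix.det_one, mul_one]
  convert Matrix.det_submatrix_equiv_self (Equiv.ofInjective β hβ)
    (A.toSquareBlockProp (· ∈ Set.range β))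
  rfl

theorem adjugate_succAbove_of_row_eq_single {N : ℕ} {A : Matrix (Fin (N + 1)) (Fin (N + 1)) R}
    {c : Fin (N + 1)} (hA : A c = Pi.single c 1) (p q : Fin N) :
    A.adjugate (c.succAbove q) (c.succAbove p) =
      (A.submatrix c.succAbove c.succAbove).adjugate q p := by
  rw [Matrix.adjugate_apply, Matrix.adjugate_apply,
    ← det_submatrix_of_rows_eq_single (β := c.succAbove) Fin.succAbove_right_injective]
  · congr 1
    ext u w
    simp only [Matrix.submatrix_apply, Matrix.updateRow_apply, Fin.succAbove_right_inj,
      Pi.single_apply]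
  · intro w hw
    obtain rfl : w = c := by simpa using hw
    rw [Matrix.updateRow_ne (Fin.succAbove_ne w p).symm, hA]

theorem image_val_comp_eq_range_sdiff {n s : ℕ} {I : Finset ℕ} {α : Fin s → Fin n}
    (hI : ∀ u, u ∈ Set.range α ↔ (u : ℕ) ∉ I) : univ.image (Fin.val ∘ α) = range n \ I := by
  ext u
  simp only [mem_image, mem_univ, true_and, Function.comp_apply, mem_sdiff, mem_range]
  constructor
  · rintro ⟨t, rfl⟩
    exact ⟨(α t).isLt, (hI (α t)).1 ⟨t, rfl⟩⟩
  · rintro ⟨hu, huI⟩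
    obtain ⟨t, ht⟩ := (hI ⟨u, hu⟩).2 huI
    exact ⟨t, congrArg Fin.val ht⟩

theorem minorDet_eq_det_submatrix (M : Matrix ℕ ℕ R) {n s : ℕ} {I J : Finset ℕ}
    {α β : Fin s → Fin n} (hα : StrictMono α) (hβ : StrictMono β)
    (hI : ∀ u, u ∈ Set.range α ↔ (u : ℕ) ∉ I) (hJ : ∀ u, u ∈ Set.range β ↔ (u : ℕ) ∉ J) :
    minorDet M n I J = ((M.submatrix Fin.val Fin.val).submatrix α β).det := by
  have himageI := image_val_comp_eq_range_sdiff hI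
  have himageJ := image_val_comp_eq_range_sdiff hJ
  obtain rfl : (range n \ I).card = s := by
    rw [← himageI, card_image_of_injective _ (Fin.val_injective.comp hα.injective), card_fin]
  have hcard : (range n \ J).card = (range n \ I).card := by
    rw [← himageJ, card_image_of_injective _ (Fin.val_injective.comp hβ.injective), card_fin]
  have hαu := orderEmbOfFin_unique rfl
    (fun t => himageI.subset (mem_image_of_mem _ (mem_univ t))) (Fin.val_strictMono.comp hα)
  have hβu := orderEmbOfFin_unique hcard
    (fun t => himageJ.subset (mem_image_of_mem _ (mem_univ t))) (Fin.val_strictMono.comp hβ)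
  rw [minorDet, dif_pos hcard]
  congr 1
  ext u w
  exact (congrArg₂ M (congrFun hαu u) (congrFun hβu w)).symm

theorem val_succAbove {N : ℕ} (c : Fin (N + 1)) (p : Fin N) :
    (c.succAbove p : ℕ) = skip c p := by
  simp only [Fin.succAbove, Fin.lt_def, Fin.val_castSucc, skip]
  split_ifs <;> rfl

theorem lap_apply (a : ℕ → ℕ → R) {n : ℕ} (w u : Fin n) :
    lap a n w u = (∑ v : Fin n, a w v • (Pi.single w 1 - Pi.single v 1 : Fin n → R)) u := by
  have hdegree : ∑ l ∈ range n \ {(w : ℕ)}, a w l = ∑ v : Fin n, a w v - a w w := by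
    rw [sum_sdiff_eq_sub (by simp), sum_range, sum_singleton]
  rw [lap, hdegree]
  by_cases hwu : w = u
  · subst hwu
    simp [mul_sub, Pi.single_apply]
  · simp [hwu, Pi.single_apply, Ne.symm hwu, Fin.val_inj]

variable {n : ℕ} {a : ℕ → ℕ → R} {x : Sym2 (Fin n) → R}

theorem groundedLaplacian_apply_of_notMem (hx : ∀ u v, x s(u, v) = a u v) {I : Finset (Fin n)}
    {w : Fin n} (hw : w ∉ I) :
    groundedLaplacian (fun u v => x s(u, v)) I w = fun u : Fin n => lap a n w u := by
  funext u
  simp only [groundedLaplacian_apply, if_neg hw, lap_apply, hx]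

theorem minorDet_lap_pair {N : ℕ} {x : Sym2 (Fin (N + 2)) → R} (hx : ∀ u v, x s(u, v) = a u v)
    (c : Fin (N + 2)) (p q : Fin (N + 1)) :
    (-1) ^ (p + q : ℕ) * minorDet (lap a (N + 2)) (N + 2) {↑c, skip c p} {↑c, skip c q} =
      rootedForestSum x {c.succAbove p, c} (c.succAbove q) (c.succAbove p) := by
  have hrange (r : Fin (N + 1)) (u) : u ∈ Set.range (c.succAbove ∘ r.succAbove) ↔
      (u : ℕ) ∉ ({↑c, skip c r} : Finset ℕ) := by
    rw [← val_succAbove]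
    obtain rfl | ⟨v, rfl⟩ := Fin.eq_self_or_eq_succAbove c u <;>
      simp [Fin.val_inj, Set.range_comp, Fin.succAbove_ne]
  have hmono (r : Fin (N + 1)) : StrictMono (c.succAbove ∘ r.succAbove) :=
    (Fin.strictMono_succAbove c).comp (Fin.strictMono_succAbove r)
  rw [minorDet_eq_det_submatrix _ (hmono p) (hmono q) (hrange p) (hrange q),
    ← adjugate_groundedLaplacian,
    adjugate_succAbove_of_row_eq_single (if_pos (mem_singleton_self c)),
    Matrix.adjugate_fin_succ_eq_det_submatrix]
  congr 2
  ext u w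
  exact (congrFun (groundedLaplacian_apply_of_notMem hx
    (notMem_singleton.2 (Fin.succAbove_ne c _))) _).symm

theorem minorDet_lap_pair_castLE (hx : ∀ u v, x s(u, v) = a u v) {k : ℕ} (hm : k + 1 ≤ n)
    (c : Fin (k + 1)) (p q : Fin k) :
    (-1) ^ (p + q : ℕ) * minorDet (lap a n) n {↑c, skip c p} {↑c, skip c q} =
      rootedForestSum x {Fin.castLE hm (c.succAbove p), Fin.castLE hm c}
        (Fin.castLE hm (c.succAbove q)) (Fin.castLE hm (c.succAbove p)) := by
  obtain ⟨N, rfl⟩ : ∃ N, n = N + 2 := ⟨n - 2, by have := p.isLt; omega⟩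
  have hk : k ≤ N + 1 := Nat.le_of_succ_le_succ hm
  have hsucc (r : Fin k) : Fin.castLE hm (c.succAbove r) =
      (Fin.castLE hm c).succAbove (Fin.castLE hk r) := by
    simp only [Fin.ext_iff, Fin.val_castLE, val_succAbove]
  rw [hsucc, hsucc]
  exact minorDet_lap_pair hx (Fin.castLE hm c) (Fin.castLE hk p) (Fin.castLE hk q)

/-- The marked vertices, which are the first `m` vertices. -/
def markedVertices (n m : ℕ) : Finset (Fin n) :=
  {u | (u : ℕ) < m}

theorem mem_markedVertices {n m : ℕ} {u : Fin n} : u ∈ markedVertices n m ↔ (u : ℕ) < m :=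
  mem_filter_univ u

/-- The enumeration of `{y} ∪ {m, …, m + d - 1}`, increasing for `y < m`. -/
def consUnmarked {m d : ℕ} (y : Fin (m + d)) : Fin (d + 1) → Fin (m + d) :=
  Fin.cons y (Fin.natAdd m)

theorem strictMono_consUnmarked {m d : ℕ} {y : Fin (m + d)} (hy : y ∈ markedVertices (m + d) m) :
    StrictMono (consUnmarked y) := by
  refine Fin.strictMono_cons.2 ⟨fun t => ?_, Fin.strictMono_natAdd m⟩
  exact (mem_markedVertices.1 hy).trans_le (Nat.le_add_right m t)

theorem mem_range_consUnmarked {m d : ℕ} {y u : Fin (m + d)} :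
    u ∈ Set.range (consUnmarked y) ↔ u ∉ (markedVertices (m + d) m).erase y := by
  have hnatAdd : u ∈ Set.range (Fin.natAdd m : Fin d → Fin (m + d)) ↔ m ≤ (u : ℕ) := by
    refine ⟨?_, fun h => ⟨⟨u - m, by omega⟩, Fin.ext (Nat.add_sub_cancel' h)⟩⟩
    rintro ⟨t, rfl⟩
    exact Nat.le_add_right m t
  rw [consUnmarked, Fin.range_cons, Set.mem_insert_iff, hnatAdd, mem_erase, mem_markedVertices,
    not_and_or, not_not, not_lt]

theorem mem_range_consUnmarked_iff_val {m d : ℕ} {y : Fin (m + d)} (u : Fin (m + d)) :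
    u ∈ Set.range (consUnmarked y) ↔ (u : ℕ) ∉ range m \ {(y : ℕ)} := by
  rw [mem_range_consUnmarked, mem_erase, mem_markedVertices, mem_sdiff, mem_range, mem_singleton,
    Fin.val_inj, and_comm]

theorem minorDet_lap_marked_self (hx : ∀ u v, x s(u, v) = a u v) {m : ℕ} (hm : m ≤ n)
    {y c : Fin n} (hy : y ∈ markedVertices n m) (hc : c ∈ (markedVertices n m).erase y) :
    minorDet (lap a n) n (range m \ {(y : ℕ)}) (range m \ {(y : ℕ)}) =
      rootedForestSum x ((markedVertices n m).erase y) c c := by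
  obtain ⟨d, rfl⟩ := Nat.exists_eq_add_of_le hm
  have hβ := strictMono_consUnmarked hy
  rw [minorDet_eq_det_submatrix _ hβ hβ mem_range_consUnmarked_iff_val
    mem_range_consUnmarked_iff_val, ← det_groundedLaplacian x hc,
    ← det_submatrix_of_rows_eq_single hβ.injective]
  · congr 1
    ext t u
    exact (congrFun (groundedLaplacian_apply_of_notMem hx
      (mem_range_consUnmarked.1 ⟨t, rfl⟩)) _).symm
  · intro w hw
    exact if_pos (not_not.1 (mem_range_consUnmarked.not.1 hw))

theorem swap_comp_consUnmarked {m d : ℕ} {y j : Fin (m + d)}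
    (hy : y ∈ markedVertices (m + d) m) (hj : j ∈ markedVertices (m + d) m) :
    Equiv.swap y j ∘ consUnmarked j = consUnmarked y := by
  funext t
  cases t using Fin.cases with
  | zero => exact Equiv.swap_apply_right y j
  | succ t =>
    have hne {z : Fin (m + d)} (hz : z ∈ markedVertices (m + d) m) : Fin.natAdd m t ≠ z := by
      rintro rfl
      exact (mem_markedVertices.1 hz).not_ge (Nat.le_add_right m t)
    exact Equiv.swap_apply_of_ne_of_ne (hne hy) (hne hj)

theorem minorDet_lap_marked_ne (hx : ∀ u v, x s(u, v) = a u v) {m : ℕ} (hm : m ≤ n)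
    {y j : Fin n} (hy : y ∈ markedVertices n m) (hj : j ∈ markedVertices n m)
    (hyj : y ≠ j) :
    minorDet (lap a n) n (range m \ {(y : ℕ)}) (range m \ {(j : ℕ)}) =
      -rootedForestSum x ((markedVertices n m).erase y) y j := by
  obtain ⟨d, rfl⟩ := Nat.exists_eq_add_of_le hm
  let G := groundedLaplacian (fun u v => x s(u, v)) ((markedVertices (m + d) m).erase y)
  -- The minor keeps row `y` but column `j`: swapping rows `y` and `j` makes it principal and
  -- costs a sign.
  let X := (G.updateRow j (Pi.single y 1)).submatrix (Equiv.swap y j) id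
  have hj' : j ∈ (markedVertices (m + d) m).erase y := mem_erase.2 ⟨hyj.symm, hj⟩
  have hX : ∀ w ∉ Set.range (consUnmarked j), X w = Pi.single w 1 := by
    intro w hw
    obtain ⟨hwj, hwM⟩ := mem_erase.1 (not_not.1 (mem_range_consUnmarked.not.1 hw))
    change G.updateRow j (Pi.single y 1) (Equiv.swap y j w) = Pi.single w 1
    by_cases hwy : w = y
    · rw [hwy, Equiv.swap_apply_left, Matrix.updateRow_self]
    · rw [Equiv.swap_apply_of_ne_of_ne hwy hwj, Matrix.updateRow_ne hwj]
      exact if_pos (mem_erase.2 ⟨hwy, hwM⟩)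
  have hminor : ((lap a (m + d)).submatrix Fin.val Fin.val).submatrix (consUnmarked y)
      (consUnmarked j) = X.submatrix (consUnmarked j) (consUnmarked j) := by
    ext t u
    have ht : consUnmarked y t ∉ (markedVertices (m + d) m).erase y :=
      mem_range_consUnmarked.1 ⟨t, rfl⟩
    change lap a (m + d) (consUnmarked y t) (consUnmarked j u) =
      G.updateRow j _ ((Equiv.swap y j ∘ consUnmarked j) t) (consUnmarked j u)
    rw [swap_comp_consUnmarked hy hj, Matrix.updateRow_ne (ne_of_mem_of_not_mem hj' ht).symm]
    exact (congrFun (groundedLaplacian_apply_of_notMem hx ht) _).symm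
  rw [← insert_eq_self.2 hj', ← adjugate_groundedLaplacian,
    minorDet_eq_det_submatrix _ (strictMono_consUnmarked hy) (strictMono_consUnmarked hj)
    mem_range_consUnmarked_iff_val mem_range_consUnmarked_iff_val, hminor,
    det_submatrix_of_rows_eq_single (strictMono_consUnmarked hj).injective hX,
    Matrix.det_permute, Equiv.Perm.sign_swap hyj, Matrix.adjugate_apply]
  simp only [G, Units.val_neg, Units.val_one, Int.cast_neg, Int.cast_one, neg_mul, one_mul]

theorem image_castLE {m : ℕ} (hm : m ≤ n) : univ.image (Fin.castLE hm) = markedVertices n m := by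
  ext y
  simp only [mem_image, mem_univ, true_and, mem_markedVertices]
  refine ⟨?_, fun hy => ⟨⟨y, hy⟩, rfl⟩⟩
  rintro ⟨i, rfl⟩
  exact i.isLt

theorem image_castLE_succAbove {k : ℕ} (hm : k + 1 ≤ n) (c : Fin (k + 1)) :
    univ.image (Fin.castLE hm ∘ c.succAbove) =
      (markedVertices n (k + 1)).erase (Fin.castLE hm c) := by
  rw [← image_image, Fin.image_succAbove_univ, compl_eq_univ_sdiff, sdiff_singleton_eq_erase,
    image_erase (Fin.castLE_injective hm), image_castLE]

theorem lapRHS_eq_rootedForestSum (hx : ∀ u v, x s(u, v) = a u v) {k : ℕ} (hm : k + 1 ≤ n)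
    (c : Fin (k + 1)) (p : Fin k) {C J : Fin n} (hC : C = Fin.castLE hm c)
    (hJ : J = Fin.castLE hm (c.succAbove p)) :
    lapRHS a n (k + 1) c c p =
      rootedForestSum x {J, C} J J * rootedForestSum x ((markedVertices n (k + 1)).erase J) C C -
        ∑ y ∈ ((markedVertices n (k + 1)).erase J).erase C,
          rootedForestSum x {y, C} J y *
            rootedForestSum x ((markedVertices n (k + 1)).erase y) y J := by
  subst hC hJ
  let v : Fin k → Fin n := fun q => Fin.castLE hm (c.succAbove q)
  have hv (q : Fin k) : v q ∈ markedVertices n (k + 1) :=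
    mem_markedVertices.2 (c.succAbove q).isLt
  have hvC (q : Fin k) : Fin.castLE hm c ∈ (markedVertices n (k + 1)).erase (v q) :=
    mem_erase.2 ⟨fun h => Fin.succAbove_ne c q (Fin.castLE_injective hm h).symm,
      mem_markedVertices.2 c.isLt⟩
  have hval (q : Fin k) : (v q : ℕ) = skip c q := val_succAbove c q
  have hv_inj : Function.Injective v :=
    (Fin.castLE_injective hm).comp Fin.succAbove_right_injective
  have hothers : ((markedVertices n (k + 1)).erase (v p)).erase (Fin.castLE hm c) =
      (univ.erase p).image v := by
    rw [erase_right_comm, ← image_castLE_succAbove]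
    exact (image_erase hv_inj univ p).symm
  rw [hothers, sum_image hv_inj.injOn, lapRHS, Even.neg_one_pow ⟨_, rfl⟩, one_mul,
    Nat.add_sub_cancel, sum_range, ← add_sum_erase univ _ (mem_univ p), sub_eq_add_neg,
    ← sum_neg_distrib]
  congr 1
  · rw [← mul_assoc, minorDet_lap_pair_castLE hx hm, ← hval,
      minorDet_lap_marked_self hx hm (hv p) (hvC p)]
  · refine sum_congr rfl fun q hq => ?_
    rw [← mul_assoc, minorDet_lap_pair_castLE hx hm, ← hval, ← hval,
      minorDet_lap_marked_ne hx hm (hv q) (hv p) (hv_inj.ne (ne_of_mem_erase hq)), mul_neg]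

end Minors

/-! ### Spanning forest polynomials of set partitions -/

section Partitions

variable {V R : Type*} [DecidableEq V] [CommRing R]

theorem IsRootedForest.reachable_ite_iff {r s : V} (hrs : r ≠ s) {F : Finset (Sym2 V)}
    (hF : IsRootedForest {r, s} F) (w : V) (P : Prop) [Decidable P] :
    (edgeGraph F).Reachable w (if P then r else s) ↔ (P ↔ (edgeGraph F).Reachable w r) := by
  have hor : (edgeGraph F).Reachable w r ∨ (edgeGraph F).Reachable w s := by
    simpa using (hF.existsUnique_root w).exists
  have hnot : ¬ ((edgeGraph F).Reachable w r ∧ (edgeGraph F).Reachable w s) := fun h =>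
    hrs (hF.root_unique (by simp) (by simp) h.1 h.2)
  split_ifs <;> tauto

variable [Fintype V]

theorem isCompatibleForest_top_iff {m : ℕ} {v ρ : Fin m → V} {p : Fin m → Option ℕ} {I : Finset V}
    (hp : ∀ i, p i ≠ none) (hpρ : ∀ i i', p i = p i' ↔ ρ i = ρ i') (hρ : ∀ i, ρ i ∈ I)
    (hI : ∀ r ∈ I, ∃ i, v i = r ∧ ρ i = r) {F : Finset (Sym2 V)} :
    IsCompatibleForest (⊤ : SimpleGraph V) v p F ↔
      IsRootedForest I F ∧ ∀ i, (edgeGraph F).Reachable (v i) (ρ i) := by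
  constructor
  · rintro ⟨hsub, hacyclic, hparts, hcover⟩
    have hroot (i : Fin m) : (edgeGraph F).Reachable (v i) (ρ i) := by
      obtain ⟨i', hvi', hρi'⟩ := hI _ (hρ i)
      rw [← hvi']
      exact (hparts i i' (hp i) (hp i')).2 ((hpρ i i').2 hρi'.symm)
    refine ⟨⟨fun e he => ?_, hacyclic, fun w => ?_⟩, hroot⟩
    · exact SimpleGraph.not_isDiag_of_mem_edgeSet _ (hsub he)
    · obtain ⟨i, -, hwi⟩ := hcover w
      refine ⟨ρ i, ⟨hρ i, hwi.trans (hroot i)⟩, ?_⟩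
      rintro r ⟨hr, hwr⟩
      obtain ⟨i', rfl, hρi'⟩ := hI r hr
      rw [← hρi']
      exact (hpρ i' i).1 ((hparts i' i (hp i') (hp i)).1 (hwr.symm.trans hwi))
  · rintro ⟨hF, hroot⟩
    refine ⟨fun e he => ?_, hF.isAcyclic, fun i i' _ _ => ?_, fun w => ?_⟩
    · rw [SimpleGraph.edgeSet_top]
      exact hF.not_isDiag e he
    · rw [hpρ]
      refine ⟨fun h => ?_, fun h => (hroot i).trans (h ▸ (hroot i').symm)⟩
      exact hF.root_unique (hρ i) (hρ i') (hroot i) (h.trans (hroot i'))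
    · obtain ⟨r, ⟨hr, hwr⟩, -⟩ := hF.existsUnique_root w
      obtain ⟨i, rfl, -⟩ := hI r hr
      exact ⟨i, hp i, hwr⟩

open Classical in
theorem forestPoly_top_eq_sum (x : Sym2 V → R) {m : ℕ} {v ρ : Fin m → V} {p : Fin m → Option ℕ}
    {I : Finset V} (hp : ∀ i, p i ≠ none) (hpρ : ∀ i i', p i = p i' ↔ ρ i = ρ i')
    (hρ : ∀ i, ρ i ∈ I) (hI : ∀ r ∈ I, ∃ i, v i = r ∧ ρ i = r) :
    forestPoly (⊤ : SimpleGraph V) x v p =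
      ∑ F with IsRootedForest I F ∧ ∀ i, (edgeGraph F).Reachable (v i) (ρ i), ∏ e ∈ F, x e := by
  rw [forestPoly, ← sum_filter]
  refine sum_congr ?_ fun _ _ => rfl
  ext F
  rw [mem_filter, mem_filter_univ, ← isCompatibleForest_top_iff hp hpρ hρ hI, mem_powerset,
    and_iff_right_iff_imp]
  exact fun hF e he => SimpleGraph.mem_edgeFinset.2 (hF.1 he)

theorem forestPoly_pair_eq_rootedForestSum (x : Sym2 V → R) {m : ℕ} {v : Fin m → V}
    (hv : Function.Injective v) {l j : Fin m} (hjl : j ≠ l) :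
    forestPoly (⊤ : SimpleGraph V) x v
        (fun i => if (i : ℕ) = l then some (j : ℕ) else some (i : ℕ)) =
      rootedForestSum x ((univ.image v).erase (v l)) (v l) (v j) := by
  classical
  let ρ : Fin m → Fin m := fun i => if i = l then j else i
  have hρ (i : Fin m) : ρ i ≠ l := by
    by_cases hi : i = l <;> simp [ρ, hi, hjl]
  have hlabel (i : Fin m) :
      (if (i : ℕ) = l then some (j : ℕ) else some (i : ℕ)) = some (ρ i : ℕ) := by
    by_cases hi : i = l <;> simp [ρ, hi, Fin.val_inj]
  simp only [hlabel]
  rw [forestPoly_top_eq_sum x (ρ := v ∘ ρ) (I := (univ.image v).erase (v l))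
    (fun i => Option.some_ne_none _)]
  · refine sum_congr (filter_congr fun F _ => and_congr_right fun _ => ?_) fun _ _ => rfl
    refine ⟨fun h => by simpa [ρ] using h l, fun h i => ?_⟩
    by_cases hi : i = l <;> simp [ρ, hi, h]
  · simp [Fin.val_inj, hv.eq_iff]
  · exact fun i => mem_erase.2 ⟨hv.ne (hρ i), mem_image_of_mem _ (mem_univ _)⟩
  · intro r hr
    obtain ⟨hrl, hr⟩ := mem_erase.1 hr
    obtain ⟨i, -, rfl⟩ := mem_image.1 hr
    exact ⟨i, rfl, congrArg v (if_neg (ne_of_apply_ne v hrl))⟩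

open Classical in
theorem forestPoly_bipartition_eq_sum (x : Sym2 V → R) {m : ℕ} {v : Fin m → V}
    (hv : Function.Injective v) {j c : Fin m} {S : Finset ℕ} (hj : (j : ℕ) ∈ S)
    (hc : (c : ℕ) ∉ S) :
    forestPoly (⊤ : SimpleGraph V) x v (fun i => if (i : ℕ) ∈ S then some 0 else some 1) =
      ∑ F with IsRootedForest {v j, v c} F ∧
        ∀ i : Fin m, (i : ℕ) ∈ S ↔ (edgeGraph F).Reachable (v i) (v j), ∏ e ∈ F, x e := by
  have hjc : v j ≠ v c := hv.ne fun h => hc (h ▸ hj)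
  rw [forestPoly_top_eq_sum x (ρ := fun i => if (i : ℕ) ∈ S then v j else v c)
    (I := {v j, v c})]
  · refine sum_congr (filter_congr fun F _ => and_congr_right fun hF => ?_) fun _ _ => rfl
    exact forall_congr' fun i => hF.reachable_ite_iff hjc (v i) _
  · intro i
    split_ifs <;> exact Option.some_ne_none _
  · intro i i'
    split_ifs <;> simp [hjc, hjc.symm]
  · intro i
    split_ifs <;> simp
  · simp only [mem_insert, mem_singleton, forall_eq_or_imp, forall_eq]
    exact ⟨⟨j, rfl, if_pos hj⟩, ⟨c, rfl, if_neg hc⟩⟩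

theorem eq_iff_of_subset_range {m : ℕ} {S T : Finset ℕ} (hS : S ⊆ range m) (hT : T ⊆ range m) :
    S = T ↔ ∀ i : Fin m, (i : ℕ) ∈ S ↔ (i : ℕ) ∈ T := by
  refine ⟨fun h i => by rw [h], fun h => ext fun i => ?_⟩
  by_cases hi : i < m
  · exact h ⟨i, hi⟩
  · have hi' := mem_range.not.2 hi
    exact iff_of_false (fun h => hi' (hS h)) fun h => hi' (hT h)

theorem sum_forestPoly_bipartition (x : Sym2 V → R) {m : ℕ} {v : Fin m → V}
    (hv : Function.Injective v) {j c : Fin m} (hjc : j ≠ c) (l : Fin m) :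
    ∑ S ∈ (range m).powerset with (j : ℕ) ∈ S ∧ (c : ℕ) ∉ S ∧ (l : ℕ) ∉ S,
      forestPoly (⊤ : SimpleGraph V) x v (fun i => if (i : ℕ) ∈ S then some 0 else some 1) =
      rootedForestSum x {v j, v c} (v l) (v c) := by
  classical
  let marked (F : Finset (Sym2 V)) : Finset ℕ :=
    {i ∈ range m | ∃ hi : i < m, (edgeGraph F).Reachable (v ⟨i, hi⟩) (v j)}
  have marked_subset (F : Finset (Sym2 V)) : marked F ⊆ range m := filter_subset _ _
  have mem_marked (F : Finset (Sym2 V)) (i : Fin m) :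
      (i : ℕ) ∈ marked F ↔ (edgeGraph F).Reachable (v i) (v j) := by
    simp [marked]
  have hvjc : v j ≠ v c := hv.ne hjc
  have hsep {F} (hF : IsRootedForest {v j, v c} F) (w : V) :
      (edgeGraph F).Reachable w (v c) ↔ ¬ (edgeGraph F).Reachable w (v j) := by
    simpa using hF.reachable_ite_iff hvjc w False
  rw [rootedForestSum, ← sum_fiberwise_of_maps_to (g := marked)]
  · refine sum_congr rfl fun S hS => ?_
    obtain ⟨hSm, hjS, hcS, hlS⟩ := mem_filter.1 hS
    rw [forestPoly_bipartition_eq_sum x hv hjS hcS, filter_filter]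
    refine sum_congr (filter_congr fun F _ => ?_) fun _ _ => rfl
    rw [and_assoc]
    refine and_congr_right fun hF => ?_
    rw [hsep hF, ← mem_marked, eq_iff_of_subset_range (marked_subset F) (mem_powerset.1 hSm)]
    simp only [mem_marked]
    exact ⟨fun h => ⟨(h l).not.1 hlS, fun i => (h i).symm⟩, fun h i => (h.2 i).symm⟩
  · intro F hF
    obtain ⟨hF, hlc⟩ := (mem_filter_univ F).1 hF
    refine mem_filter.2 ⟨mem_powerset.2 (marked_subset F), ?_⟩
    rw [mem_marked, mem_marked, mem_marked, ← hsep hF, ← hsep hF]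
    exact ⟨.refl _, .refl _, hlc⟩

end Partitions

/-- **Lemma 2.11 ("exactmonomial").**  Fix `c < m` and a column expansion index
`j' < k = m − 1`, corresponding to the marked vertex `jv = skip c j'`.  A *permissible
monomial* is a pair `(A, B)`: `A` pairs `jv` with some vertex `ℓ ≠ jv` (all other
vertices singletons), and `B` has two parts with `jv` in one part and both `c` and `ℓ`
in the other.  Then the right-hand side of `L_{c,c}(j')` equals exactly the sum of all
permissible monomials, each with coefficient `+1`, where each partition is evaluated as
a spanning forest polynomial of the complete graph on `n ≥ m` vertices with symmetric
edge weights `a` and the first `m` vertices marked. -/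
theorem exact_monomial {R : Type*} [CommRing R] (n m k : ℕ) (hm : m ≤ n)
    (hk : m = k + 1) (a : ℕ → ℕ → R) (hsym : ∀ i j, a i j = a j i)
    (c j' : ℕ) (hc : c < m) (hj' : j' < k) :
    let jv := skip c j'
    let x : Sym2 (Fin n) → R := Sym2.lift ⟨fun u w => a u w, fun u w => hsym u w⟩
    let v : Fin m → Fin n := Fin.castLE hm
    lapRHS a n m c c j' =
      ∑ ℓ ∈ (Finset.range m).erase jv,
        ∑ S ∈ (Finset.range m).powerset.filter (fun S => jv ∈ S ∧ c ∉ S ∧ ℓ ∉ S),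
          forestPoly (⊤ : SimpleGraph (Fin n)) x v
              (fun i => if (i : ℕ) = ℓ then some jv else some (i : ℕ)) *
            forestPoly (⊤ : SimpleGraph (Fin n)) x v
              (fun i => if (i : ℕ) ∈ S then some 0 else some 1) := by
  obtain rfl := hk
  intro jv x v
  lift c to Fin (k + 1) using hc
  lift j' to Fin k using hj'
  let j : Fin (k + 1) := c.succAbove j'
  have hjv : jv = j := (val_succAbove c j').symm
  have hv : Function.Injective v := Fin.castLE_injective hm
  have hjc : j ≠ c := Fin.succAbove_ne c j'
  have hmarked (i : Fin (k + 1)) : v i ∈ univ.image v := mem_image_of_mem v (mem_univ i)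
  have herase : (range (k + 1)).erase jv = (univ.erase j).image Fin.val := by
    rw [hjv, image_erase Fin.val_injective, image_fin_univ]
  rw [lapRHS_eq_rootedForestSum (x := x) (fun _ _ => rfl) hm c j' rfl rfl, ← image_castLE hm,
    rootedForestSum_mul_sub_sum x (hmarked c) (hmarked j) (hv.ne hjc.symm),
    ← image_erase hv, sum_image hv.injOn, herase, sum_image Fin.val_injective.injOn]
  refine sum_congr rfl fun l hl => ?_
  rw [hjv, ← mul_sum, ← forestPoly_pair_eq_rootedForestSum x hv (ne_of_mem_erase hl).symm,
    ← sum_forestPoly_bipartition x hv hjc l]
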